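/- Let A = (Q, Σ, Δ, Q₀, F) be an NBA with Q₀ ≠ ∅, let B be a TDPA obtained from the unified construction for A, let w : ℕ → Σ, let (αᵢ, tᵢ) be the states of the run of B on w, and let kᵢ be the dominating rank of the transition taken at time i. Then: (a) Q_{t_{i+1}} = Δ(Q_{tᵢ}, w(i)) for all i; and (b) for every run q of A on w, q(i) ∈ Q_{tᵢ} for all i, and the rank-profiles satisfy rp_{(α_{i+1}, t_{i+1})}(q(i+1)) ≼_{kᵢ} rp_{(αᵢ, tᵢ)}(q(i)) for all i. -/

import Mathlib

/-! Core definitions: NBA, TDPA, ranked slices, and the unified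
determinization construction. -/

universe u v

/-- A nondeterministic Büchi automaton over state type `Q` and alphabet `Alp`. -/
structure NBA (Q : Type u) (Alp : Type v) where
  delta : Q → Alp → Set Q
  Q0 : Set Q
  F : Set Q

namespace NBA

variable {Q : Type u} {Alp : Type v}

/-- `Δ(X, x)`: successors of a set of states. -/
def nextSet (A : NBA Q Alp) (X : Set Q) (x : Alp) : Set Q := ⋃ q ∈ X, A.delta q x

/-- A run of the NBA on the word `w`. -/
def IsRun (A : NBA Q Alp) (w : ℕ → Alp) (q : ℕ → Q) : Prop :=
  q 0 ∈ A.Q0 ∧ ∀ i, q (i + 1) ∈ A.delta (q i) (w i)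

/-- Acceptance: some run visits `F` infinitely often. -/
def Accepts (A : NBA Q Alp) (w : ℕ → Alp) : Prop :=
  ∃ q, A.IsRun w q ∧ ∀ N, ∃ i, N ≤ i ∧ q i ∈ A.F

end NBA

/-- A transition-based deterministic parity automaton. -/
structure TDPA (P : Type u) (Alp : Type v) where
  delta : P → Alp → P
  p0 : P
  c : P → Alp → ℕ

namespace TDPA

variable {P : Type u} {Alp : Type v}

/-- The unique run of the TDPA on `w`. -/
def run (B : TDPA P Alp) (w : ℕ → Alp) : ℕ → P
  | 0 => B.p0
  | i + 1 => B.delta (B.run w i) (w i)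

/-- Acceptance: the minimum priority occurring infinitely often on the run is even. -/
def Accepts (B : TDPA P Alp) (w : ℕ → Alp) : Prop :=
  ∃ m, (∀ N, ∃ i, N ≤ i ∧ B.c (B.run w i) (w i) = m) ∧
    (∀ m', (∀ N, ∃ i, N ≤ i ∧ B.c (B.run w i) (w i) = m') → m ≤ m') ∧ Even m

/-- Reachability from the initial state. -/
def Reachable (B : TDPA P Alp) (p : P) : Prop :=
  ∃ l : List Alp, l.foldl B.delta B.p0 = p

end TDPA

/-- A (ranked) slice: a tuple `S 1, …, S n` of subsets of `Q` together with a
ranking function `rk`.  Only the values on `{1, …, n}` are relevant. -/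
structure Slice (Q : Type u) where
  n : ℕ
  S : ℕ → Set Q
  rk : ℕ → ℕ

namespace Slice

variable {Q : Type u}

/-- A valid ranked slice: the sets are nonempty and pairwise disjoint, the ranking is a
bijection of `{1,…,n}` and the last set has rank `1`. -/
def Valid (s : Slice Q) : Prop :=
  (∀ i ∈ Set.Icc 1 s.n, (s.S i).Nonempty) ∧
  (∀ i ∈ Set.Icc 1 s.n, ∀ j ∈ Set.Icc 1 s.n, i ≠ j → Disjoint (s.S i) (s.S j)) ∧
  Set.BijOn s.rk (Set.Icc 1 s.n) (Set.Icc 1 s.n) ∧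
  (1 ≤ s.n → s.rk s.n = 1)

/-- `Q_t`: union of all sets of the slice. -/
def states (s : Slice Q) : Set Q := ⋃ i ∈ Set.Icc 1 s.n, s.S i

/-- `idx q`: the (unique) index of the set containing `q`. -/
noncomputable def idx (s : Slice Q) (q : Q) : ℕ :=
  sInf {i | 1 ≤ i ∧ i ≤ s.n ∧ q ∈ s.S i}

end Slice

variable {Q : Type u} {Alp : Type v}

/-- `Δ_t(q, x)`: successors of `q` not reachable from a set strictly to the left. -/
noncomputable def dT (A : NBA Q Alp) (s : Slice Q) (q : Q) (x : Alp) : Set Q :=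
  A.delta q x \ A.nextSet (⋃ i ∈ Set.Ico 1 (s.idx q), s.S i) x

/-- `Δ_t(X, x)` for a set `X`. -/
noncomputable def dTs (A : NBA Q Alp) (s : Slice Q) (X : Set Q) (x : Alp) : Set Q :=
  ⋃ q ∈ X, dT A s q x

/-- The sets `Ŝ_j` of the step stage: odd positions are left (accepting) children, even
positions right (non-accepting) children. -/
noncomputable def hatS (A : NBA Q Alp) (s : Slice Q) (x : Alp) (j : ℕ) : Set Q :=
  if j % 2 = 1 then dTs A s (s.S ((j + 1) / 2)) x ∩ A.F
  else dTs A s (s.S (j / 2)) x \ A.F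

/-- The ranking `α̂` of the step stage. -/
def hatRk (s : Slice Q) (j : ℕ) : ℕ :=
  if j % 2 = 1 then s.n + 1 else s.rk (j / 2)

/-- The prune stage: `xs 1 < … < xs nt` enumerates the indices of the nonempty sets
among `Ŝ_1, …, Ŝ_{2n}`, and `xs (nt+1) = 2n + 1`. -/
def IsPrune (A : NBA Q Alp) (s : Slice Q) (x : Alp) (nt : ℕ) (xs : ℕ → ℕ) : Prop :=
  StrictMonoOn xs (Set.Icc 1 nt) ∧
  (∀ i ∈ Set.Icc 1 nt, xs i ∈ Set.Icc 1 (2 * s.n) ∧ (hatS A s x (xs i)).Nonempty) ∧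
  (∀ j ∈ Set.Icc 1 (2 * s.n), (hatS A s x j).Nonempty → ∃ i ∈ Set.Icc 1 nt, xs i = j) ∧
  xs (nt + 1) = 2 * s.n + 1

/-- The ranking `α̃` after prune: `α̃ i = min {α̂ j | xs i ≤ j < xs (i+1)}`. -/
noncomputable def tildeRk (s : Slice Q) (xs : ℕ → ℕ) (i : ℕ) : ℕ :=
  sInf (hatRk s '' {j | xs i ≤ j ∧ j < xs (i + 1)})

/-- The green ranks: ranks in the image of `α̃` that mark an empty set after step. -/
def greenSet (A : NBA Q Alp) (s : Slice Q) (x : Alp) (nt : ℕ) (xs : ℕ → ℕ) : Set ℕ :=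
  {r | (∃ i ∈ Set.Icc 1 nt, tildeRk s xs i = r) ∧
    ∃ j ∈ Set.Icc 1 (2 * s.n), hatS A s x j = ∅ ∧ hatRk s j = r}

/-- The red ranks: ranks in the image of `α̂` but not of `α̃`. -/
def redSet (s : Slice Q) (nt : ℕ) (xs : ℕ → ℕ) : Set ℕ :=
  {r | (∃ j ∈ Set.Icc 1 (2 * s.n), hatRk s j = r) ∧ ¬ ∃ i ∈ Set.Icc 1 nt, tildeRk s xs i = r}

open Classical in
/-- The dominating rank: the minimum of the active ranks `G ∪ R`, or `|Q| + 1` if there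
is no active rank. -/
noncomputable def domRank (G R : Set ℕ) (card : ℕ) : ℕ :=
  if (G ∪ R).Nonempty then sInf (G ∪ R) else card + 1

/-- A partition of `{1,…,nt}` into consecutive intervals, described by its boundaries:
the `j`-th interval is `Icc (b (j-1) + 1) (b j)`. -/
def IsIntervalPartition (nt n' : ℕ) (b : ℕ → ℕ) : Prop :=
  b 0 = 0 ∧ b n' = nt ∧ StrictMonoOn b (Set.Icc 0 n')

/-- The merge constraints: intervals containing a rank `< k` are singletons, and an index
carrying rank `k` is the maximum of its interval. -/
def MergeConstraints (n' : ℕ) (b : ℕ → ℕ) (aT : ℕ → ℕ) (k : ℕ) : Prop :=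
  ∀ j ∈ Set.Icc 1 n', ∀ l ∈ Set.Icc (b (j - 1) + 1) (b j),
    (aT l < k → b j = b (j - 1) + 1) ∧ (aT l = k → l = b j)

/-- A full transition of the (unified) construction, via prune data `(nt, xs)` and the
merge partition `(n', b)`. -/
noncomputable def TransVia [Fintype Q] (A : NBA Q Alp) (s : Slice Q) (x : Alp)
    (s' : Slice Q) (pr : ℕ) (nt : ℕ) (xs : ℕ → ℕ) (n' : ℕ) (b : ℕ → ℕ) : Prop :=
  IsPrune A s x nt xs ∧
  IsIntervalPartition nt n' b ∧
  MergeConstraints n' b (tildeRk s xs)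
    (domRank (greenSet A s x nt xs) (redSet s nt xs) (Fintype.card Q)) ∧
  ((domRank (greenSet A s x nt xs) (redSet s nt xs) (Fintype.card Q) ∈ greenSet A s x nt xs ∧
      pr = 2 * domRank (greenSet A s x nt xs) (redSet s nt xs) (Fintype.card Q)) ∨
   (domRank (greenSet A s x nt xs) (redSet s nt xs) (Fintype.card Q) ∉ greenSet A s x nt xs ∧
      pr = 2 * domRank (greenSet A s x nt xs) (redSet s nt xs) (Fintype.card Q) - 1)) ∧
  s'.n = n' ∧
  (∀ i ∈ Set.Icc 1 n', s'.S i = ⋃ j ∈ Set.Icc (b (i - 1) + 1) (b i), hatS A s x (xs j)) ∧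
  s'.Valid ∧
  (∀ i ∈ Set.Icc 1 n', ∀ j ∈ Set.Icc 1 n',
    sInf (tildeRk s xs '' Set.Icc (b (i - 1) + 1) (b i)) <
      sInf (tildeRk s xs '' Set.Icc (b (j - 1) + 1) (b j)) → s'.rk i < s'.rk j)

/-- A transition of the unified construction (any valid merge partition). -/
noncomputable def UnifiedTrans [Fintype Q] (A : NBA Q Alp) (s : Slice Q) (x : Alp)
    (s' : Slice Q) (pr : ℕ) : Prop :=
  ∃ nt xs n' b, TransVia A s x s' pr nt xs n' b

/-- A transition of the Muller-Schupp construction (merge partition into singletons). -/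
noncomputable def MSTrans [Fintype Q] (A : NBA Q Alp) (s : Slice Q) (x : Alp)
    (s' : Slice Q) (pr : ℕ) : Prop :=
  ∃ nt xs, TransVia A s x s' pr nt xs nt id

/-- `B` is obtained from the unified construction for `A`. -/
noncomputable def ObtainedUnified [Fintype Q] (A : NBA Q Alp) (B : TDPA (Slice Q) Alp) : Prop :=
  B.p0.n = 1 ∧ B.p0.S 1 = A.Q0 ∧ B.p0.rk 1 = 1 ∧
  ∀ p, B.Reachable p → ∀ x, UnifiedTrans A p x (B.delta p x) (B.c p x)

/-- `B` is obtained from the Muller-Schupp construction for `A`. -/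
noncomputable def ObtainedMS [Fintype Q] (A : NBA Q Alp) (B : TDPA (Slice Q) Alp) : Prop :=
  B.p0.n = 1 ∧ B.p0.S 1 = A.Q0 ∧ B.p0.rk 1 = 1 ∧
  ∀ p, B.Reachable p → ∀ x, MSTrans A p x (B.delta p x) (B.c p x)

/-- The parent function `↑` of the rank tree of a ranked slice with `n` sets and
ranking `α`. -/
noncomputable def up (n : ℕ) (α : ℕ → ℕ) (i : ℕ) : ℕ :=
  sInf {k | i < k ∧ k ≤ n ∧ α k < α i}

/-- The rank-profile of index `i`: the ranks along the path of the rank tree from the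
root down to `i`. -/
noncomputable def rpIdx (n : ℕ) (α : ℕ → ℕ) (i : ℕ) : List ℕ :=
  ((((List.range (n + 1)).map (fun m => (up n α)^[m] i)).takeWhile
      (fun j => decide (1 ≤ j ∧ j ≤ n))).map α).reverse

/-- The rank-profile of a state `q` of a slice. -/
noncomputable def Slice.rp (s : Slice Q) (q : Q) : List ℕ :=
  rpIdx s.n s.rk (s.idx q)

/-- The "better than" order `≺` on rank profiles: compare the common-length prefixes
lexicographically; if they agree, the longer profile is the better (smaller) one. -/
def lexPrec (a b : List ℕ) : Prop :=
  List.Lex (· < ·) (a.take (min a.length b.length)) (b.take (min a.length b.length)) ∨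
  (a.take (min a.length b.length) = b.take (min a.length b.length) ∧
    b.length < a.length)

/-- The `k`-cut of a rank profile: the prefix `a₁…a_i` with
`i = min({length a} ∪ {j | a_j ≥ k})` (1-based). -/
noncomputable def cutk (k : ℕ) (a : List ℕ) : List ℕ :=
  a.take (sInf ({a.length} ∪ {j | 1 ≤ j ∧ j ≤ a.length ∧ k ≤ a.getD (j - 1) 0} : Set ℕ))

/-- `a ≼ₖ b`: comparison of the `k`-cuts. -/
noncomputable def precEqK (k : ℕ) (a b : List ℕ) : Prop :=
  lexPrec (cutk k a) (cutk k b) ∨ cutk k a = cutk k b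

/-!
Pruning and merging group the positions of the step stage into consecutive cells, and the rank
a cell receives is at most every old rank occurring in it. A rank below the dominating rank is
neither red nor green, so it keeps its value and its cell starts exactly at the right child
carrying it.

A rank profile read from the root downwards lists iterated minima: the first rank is the minimum
of the ranking on all positions from the given one rightwards, the next one is the minimum over
those lying in addition left of the vertex just found, and so on. Since the successor of a state
never lies in a cell right of the state's position, the new profile agrees with the old one until
a rank drops, or a rank is reached at which the old profile is cut, or the old profile ends.
-/

section Cuts

lemma cutk_nil (k : ℕ) : cutk k [] = [] := List.take_nil

/-- The set of (1-based) positions whose minimum is the length of the `k`-cut of `a`. -/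
def cutPositions (k : ℕ) (a : List ℕ) : Set ℕ :=
  {a.length} ∪ {j | 1 ≤ j ∧ j ≤ a.length ∧ k ≤ a.getD (j - 1) 0}

lemma succ_mem_cutPositions_cons {k a : ℕ} (l : List ℕ) (h : a < k) (j : ℕ) :
    j + 1 ∈ cutPositions k (a :: l) ↔ j ∈ cutPositions k l := by
  cases j <;> simp [cutPositions, h.not_ge, @eq_comm _ 0]

lemma pos_of_mem_cutPositions_cons {k a j : ℕ} {l : List ℕ}
    (hj : j ∈ cutPositions k (a :: l)) : 1 ≤ j := by
  rcases hj with rfl | hj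
  · exact Nat.succ_pos _
  · exact hj.1

lemma cutk_cons_of_le {k a : ℕ} (l : List ℕ) (h : k ≤ a) : cutk k (a :: l) = [a] := by
  have hleast : IsLeast (cutPositions k (a :: l)) 1 :=
    ⟨Or.inr (by simp [h]), fun _ => pos_of_mem_cutPositions_cons⟩
  exact congrArg (List.take · (a :: l)) hleast.csInf_eq

lemma cutk_cons_of_lt {k a : ℕ} (l : List ℕ) (h : a < k) :
    cutk k (a :: l) = a :: cutk k l := by
  have hleast : IsLeast (cutPositions k (a :: l)) (sInf (cutPositions k l) + 1) := by
    refine ⟨(succ_mem_cutPositions_cons l h _).2 (Nat.sInf_mem ⟨_, Or.inl rfl⟩), fun j hj => ?_⟩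
    obtain ⟨j, rfl⟩ := Nat.exists_eq_add_of_le' (pos_of_mem_cutPositions_cons hj)
    exact Nat.succ_le_succ (Nat.sInf_le ((succ_mem_cutPositions_cons l h j).1 hj))
  exact congrArg (List.take · (a :: l)) hleast.csInf_eq

lemma lexPrec_nil_right {a : List ℕ} (h : a ≠ []) : lexPrec a [] :=
  Or.inr ⟨by simp, List.length_pos_iff.mpr h⟩

lemma lexPrec_cons_of_lt {a b : ℕ} (x y : List ℕ) (h : a < b) :
    lexPrec (a :: x) (b :: y) := by
  left
  simp only [List.length_cons, Nat.succ_min_succ, List.take_succ_cons]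
  exact List.Lex.rel h

lemma lexPrec_cons_self {x y : List ℕ} (a : ℕ) (h : lexPrec x y) :
    lexPrec (a :: x) (a :: y) := by
  simp only [lexPrec, List.length_cons, Nat.succ_min_succ, List.take_succ_cons]
  exact h.imp List.Lex.cons fun ⟨hprefix, hlen⟩ =>
    ⟨by rw [hprefix], Nat.succ_lt_succ hlen⟩

lemma precEqK_nil_right (k : ℕ) (a : List ℕ) : precEqK k a [] := by
  rw [precEqK, cutk_nil]
  exact (ne_or_eq (cutk k a) []).imp_left lexPrec_nil_right

lemma precEqK_cons_of_lt (k : ℕ) {a b : ℕ} (x y : List ℕ) (h : a < b) :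
    precEqK k (a :: x) (b :: y) := by
  have hcut : ∀ c l, ∃ l', cutk k (c :: l) = c :: l' := fun c l =>
    (le_or_gt k c).elim (fun hc => ⟨[], cutk_cons_of_le l hc⟩)
      fun hc => ⟨_, cutk_cons_of_lt l hc⟩
  obtain ⟨x', hx⟩ := hcut a x
  obtain ⟨y', hy⟩ := hcut b y
  rw [precEqK, hx, hy]
  exact Or.inl (lexPrec_cons_of_lt _ _ h)

lemma precEqK_cons_self_of_le {k a : ℕ} (x y : List ℕ) (h : k ≤ a) :
    precEqK k (a :: x) (a :: y) := by
  rw [precEqK, cutk_cons_of_le x h, cutk_cons_of_le y h]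
  exact Or.inr rfl

lemma precEqK_cons_self_of_lt {k a : ℕ} {x y : List ℕ} (ha : a < k) (h : precEqK k x y) :
    precEqK k (a :: x) (a :: y) := by
  rw [precEqK, cutk_cons_of_lt x ha, cutk_cons_of_lt y ha]
  exact h.imp (lexPrec_cons_self a) (congrArg (a :: ·))

end Cuts

section RankProfile

/-- `IsProfileBelow α i P l`: `l` lists the ranks on the path of the rank tree from just below
`P` down to `i`. Instead of following parents upwards, the path is read downwards: its first
vertex is the position of the minimum of `α` on `[i, P)`, and the rest is the path below that
vertex. For `P = n + 1` this is the whole rank profile of `i`. -/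
inductive IsProfileBelow (α : ℕ → ℕ) (i : ℕ) : ℕ → List ℕ → Prop
  | nil : IsProfileBelow α i i []
  | cons {P p : ℕ} {l : List ℕ} : p ∈ Set.Ico i P →
      (∀ j ∈ Set.Ico i P, j ≠ p → α p < α j) → IsProfileBelow α i p l →
      IsProfileBelow α i P (α p :: l)

/-- The first `m` vertices of the path of the rank tree from `i` upwards, cut off where the
iterates of `up` leave `{1, …, n}`. -/
noncomputable def ancestors (n : ℕ) (α : ℕ → ℕ) (m i : ℕ) : List ℕ :=
  ((List.range m).map fun t => (up n α)^[t] i).takeWhile fun j => decide (1 ≤ j ∧ j ≤ n)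

lemma ancestors_succ {n i : ℕ} (α : ℕ → ℕ) (m : ℕ) (hi : i ∈ Set.Icc 1 n) :
    ancestors n α (m + 1) i = i :: ancestors n α m (up n α i) := by
  have hdec : decide (1 ≤ i ∧ i ≤ n) = true := decide_eq_true hi
  simp only [ancestors, List.range_succ_eq_map, List.map_cons, List.map_map,
    Function.iterate_zero, id, List.takeWhile_cons, hdec, if_true, Function.comp_def,
    Function.iterate_succ, Nat.succ_eq_add_one]

lemma ancestors_zero_right (n : ℕ) (α : ℕ → ℕ) (m : ℕ) : ancestors n α m 0 = [] := by
  cases m <;> simp [ancestors, List.range_succ_eq_map]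

lemma up_spec (n : ℕ) (α : ℕ → ℕ) (i : ℕ) :
    (up n α i = 0 ∧ ∀ j ∈ Set.Ioc i n, α i ≤ α j) ∨
      (up n α i ∈ Set.Ioc i n ∧ α (up n α i) < α i ∧
        ∀ j ∈ Set.Ioo i (up n α i), α i ≤ α j) := by
  rcases Set.eq_empty_or_nonempty {k | i < k ∧ k ≤ n ∧ α k < α i} with hroot | hne
  · refine Or.inl ⟨by rw [up, hroot, Nat.sInf_empty], fun j hj => ?_⟩
    exact not_lt.mp fun hlt => Set.eq_empty_iff_forall_notMem.mp hroot j ⟨hj.1, hj.2, hlt⟩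
  · obtain ⟨hlt, hle, hrk⟩ : i < up n α i ∧ up n α i ≤ n ∧ α (up n α i) < α i :=
      Nat.sInf_mem hne
    refine Or.inr ⟨⟨hlt, hle⟩, hrk, fun j hj => not_lt.mp fun hj' => ?_⟩
    exact Nat.notMem_of_lt_sInf hj.2 ⟨hj.1, hj.2.le.trans hle, hj'⟩

/-- Induction up the path: each step to the parent prepends one rank to the profile. -/
lemma isProfileBelow_ancestors {n i₀ : ℕ} {α : ℕ → ℕ} (hα : Set.InjOn α (Set.Icc 1 n))
    (hi₀ : 1 ≤ i₀) (m : ℕ) :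
    ∀ {i : ℕ} {l : List ℕ}, i ∈ Set.Icc i₀ n → n < m + i →
      (∀ j ∈ Set.Ico i₀ i, α i < α j) → IsProfileBelow α i₀ i l →
      IsProfileBelow α i₀ (n + 1) (((ancestors n α m i).map α).reverse ++ l) := by
  induction m with
  | zero => intro i l hi hm; exact absurd hi.2 (by omega)
  | succ m ih =>
    intro i l ⟨hi₀i, hin⟩ hm hmin hl
    have hstep : ∀ P ≤ n + 1, i < P → (∀ j ∈ Set.Ioo i P, α i ≤ α j) →
        (∀ j ∈ Set.Ico i₀ P, j ≠ i → α i < α j) ∧ IsProfileBelow α i₀ P (α i :: l) := by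
      intro P hP hiP hright
      have hstrict : ∀ j ∈ Set.Ico i₀ P, j ≠ i → α i < α j := by
        rintro j ⟨hj₀, hjP⟩ hne
        rcases hne.lt_or_gt with hji | hij
        · exact hmin j ⟨hj₀, hji⟩
        · exact (hright j ⟨hij, hjP⟩).lt_of_ne
            (hα.ne ⟨by omega, hin⟩ ⟨by omega, by omega⟩ hij.ne)
      exact ⟨hstrict, .cons ⟨hi₀i, hiP⟩ hstrict hl⟩
    rw [ancestors_succ α m ⟨by omega, hin⟩]
    simp only [List.map_cons, List.reverse_cons, List.append_assoc, List.singleton_append]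
    rcases up_spec n α i with ⟨hroot, hright⟩ | ⟨⟨hlt, hle⟩, hrk, hright⟩
    · rw [hroot, ancestors_zero_right]
      exact (hstep (n + 1) le_rfl (by omega) fun j hj =>
        hright j ⟨hj.1, Nat.lt_succ_iff.mp hj.2⟩).2
    · obtain ⟨hstrict, hprofile⟩ := hstep (up n α i) (by omega) hlt hright
      refine ih ⟨by omega, hle⟩ (by omega) (fun j hj => ?_) hprofile
      rcases eq_or_ne j i with rfl | hne
      · exact hrk
      · exact hrk.trans (hstrict j hj hne)

lemma isProfileBelow_rpIdx {n i : ℕ} {α : ℕ → ℕ} (hα : Set.InjOn α (Set.Icc 1 n))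
    (hi : i ∈ Set.Icc 1 n) : IsProfileBelow α i (n + 1) (rpIdx n α i) := by
  have h := isProfileBelow_ancestors hα hi.1 (n + 1) ⟨le_rfl, hi.2⟩ (by omega)
    (fun j hj => absurd hj.1 hj.2.not_ge) .nil
  rwa [List.append_nil] at h

/-- `R` relates a vertex `P` of the old path to a vertex `P'` of the new one as long as the two
paths carry the same ranks. -/
lemma IsProfileBelow.precEqK {α α' : ℕ → ℕ} {i i' k : ℕ} {R : ℕ → ℕ → Prop}
    (hle : ∀ {P P'}, R P P' → ∀ p ∈ Set.Ico i P, ∃ p' ∈ Set.Ico i' P', α' p' ≤ α p)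
    (heq : ∀ {P P'}, R P P' → ∀ p ∈ Set.Ico i P, α p < k →
      ∃ p' ∈ Set.Ico i' P', α' p' = α p ∧ R p p')
    {P P' : ℕ} {l l' : List ℕ} (hl : IsProfileBelow α i P l)
    (hl' : IsProfileBelow α' i' P' l') (hR : R P P') : precEqK k l' l := by
  induction hl generalizing P' l' with
  | nil => exact precEqK_nil_right k l'
  | @cons P p l hp _ _ ih =>
    obtain ⟨p', hp', hp'p⟩ := hle hR p hp
    cases hl' with
    | nil => exact absurd hp'.1 hp'.2.not_ge
    | @cons _ r l' hr hrmin hl' =>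
      have hrp : α' r ≤ α p := by
        rcases eq_or_ne p' r with rfl | hne
        · exact hp'p
        · exact (hrmin p' hp' hne).le.trans hp'p
      rcases hrp.lt_or_eq with hlt | hrp
      · exact precEqK_cons_of_lt k l' l hlt
      rw [hrp]
      rcases le_or_gt k (α p) with hk | hk
      · exact precEqK_cons_self_of_le l' l hk
      · obtain ⟨t, ht, htp, hRt⟩ := heq hR p hp hk
        obtain rfl : t = r := by
          by_contra hne
          exact (hrmin t ht hne).ne (hrp.trans htp.symm)
        exact precEqK_cons_self_of_lt hk (ih hl' hRt)

end RankProfile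

section Enumeration

lemma exists_mem_Ico_le_lt_succ {f : ℕ → ℕ} {a b j : ℕ} (hab : a ≤ b) (ha : f a ≤ j)
    (hb : j < f b) : ∃ l ∈ Set.Ico a b, j ∈ Set.Ico (f l) (f (l + 1)) := by
  induction b, hab using Nat.le_induction with
  | base => omega
  | succ b hab ih =>
    rcases lt_or_ge j (f b) with hj | hj
    · obtain ⟨l, hl, hjl⟩ := ih hj
      exact ⟨l, ⟨hl.1, hl.2.trans b.lt_succ_self⟩, hjl⟩
    · exact ⟨b, ⟨hab, b.lt_succ_self⟩, hj, hb⟩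

lemma eqOn_of_image_Icc_eq {f g : ℕ → ℕ} {m n : ℕ} (hf : StrictMonoOn f (Set.Icc 1 m))
    (hg : StrictMonoOn g (Set.Icc 1 n)) (h : f '' Set.Icc 1 m = g '' Set.Icc 1 n) :
    m = n ∧ Set.EqOn f g (Set.Icc 1 m) := by
  obtain rfl : m = n := by
    simpa [hf.injOn.ncard_image, hg.injOn.ncard_image] using congrArg Set.ncard h
  refine ⟨rfl, Set.domRestrict_eq_domRestrict_iff.mp ?_⟩
  refine (hf.domRestrict.range_inj hg.domRestrict).mp ?_
  rwa [Set.range_domRestrict, Set.range_domRestrict]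

end Enumeration

section Normalization

variable {α β : ℕ → ℕ} {m : ℕ}

lemma normalized_le_of_injOn (hα : Set.BijOn α (Set.Icc 1 m) (Set.Icc 1 m))
    (hmono : ∀ i ∈ Set.Icc 1 m, ∀ j ∈ Set.Icc 1 m, β i < β j → α i < α j)
    (hpos : ∀ i ∈ Set.Icc 1 m, 1 ≤ β i) {N : ℕ}
    (hinj : Set.InjOn β {i ∈ Set.Icc 1 m | β i ≤ N}) {y : ℕ} (hy : y ∈ Set.Icc 1 m)
    (hyN : β y ≤ N) : α y ≤ β y := by
  induction hr : α y generalizing y with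
  | zero => exact Nat.zero_le _
  | succ r ih =>
    rcases Nat.eq_zero_or_pos r with rfl | hr0
    · exact hpos y hy
    obtain ⟨z, hz, hzr⟩ := hα.surjOn (show r ∈ Set.Icc 1 m from
      ⟨hr0, by have := (hα.mapsTo hy).2; omega⟩)
    have hzy : β z ≤ β y := not_lt.mp fun hlt => by have := hmono y hy z hz hlt; omega
    have hne : β z ≠ β y := fun heq => by
      have := congrArg α (hinj ⟨hz, hzy.trans hyN⟩ ⟨hy, hyN⟩ heq)
      omega
    exact (ih hz (hzy.trans hyN) hzr).trans_lt (hzy.lt_of_ne hne)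

lemma le_normalized_of_surjOn (hpos : ∀ i ∈ Set.Icc 1 m, 1 ≤ α i)
    (hmono : ∀ i ∈ Set.Icc 1 m, ∀ j ∈ Set.Icc 1 m, β i < β j → α i < α j) {y : ℕ}
    (hy : y ∈ Set.Icc 1 m) (hsurj : Set.SurjOn β (Set.Icc 1 m) (Set.Icc 1 (β y))) :
    β y ≤ α y := by
  induction hr : β y generalizing y with
  | zero => exact Nat.zero_le _
  | succ r ih =>
    rcases Nat.eq_zero_or_pos r with rfl | hr0
    · exact hpos y hy
    rw [hr] at hsurj
    obtain ⟨z, hz, rfl⟩ := hsurj (show r ∈ Set.Icc 1 (r + 1) from ⟨hr0, r.le_succ⟩)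
    have hz' := ih hz (hsurj.mono subset_rfl (Set.Icc_subset_Icc_right (β z).le_succ)) rfl
    exact hz'.trans_lt (hmono z hz y hy (by omega))

end Normalization

namespace NBA

lemma mem_nextSet {A : NBA Q Alp} {X : Set Q} {x : Alp} {q' : Q} :
    q' ∈ A.nextSet X x ↔ ∃ q ∈ X, q' ∈ A.delta q x := by
  simp only [nextSet, Set.mem_iUnion, exists_prop]

end NBA

namespace Slice

lemma mem_states {s : Slice Q} {q : Q} : q ∈ s.states ↔ ∃ i ∈ Set.Icc 1 s.n, q ∈ s.S i := by
  simp only [states, Set.mem_iUnion, exists_prop]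

lemma Valid.idx_eq {s : Slice Q} (hs : s.Valid) {q : Q} {i : ℕ} (hi : i ∈ Set.Icc 1 s.n)
    (hq : q ∈ s.S i) : s.idx q = i := by
  obtain ⟨h₁, hn, hmem⟩ : 1 ≤ s.idx q ∧ s.idx q ≤ s.n ∧ q ∈ s.S (s.idx q) :=
    Nat.sInf_mem (s := {i | 1 ≤ i ∧ i ≤ s.n ∧ q ∈ s.S i}) ⟨i, hi.1, hi.2, hq⟩
  by_contra hne
  exact Set.disjoint_left.mp (hs.2.1 _ ⟨h₁, hn⟩ i hi hne) hmem hq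

end Slice

section Step

variable {A : NBA Q Alp} {s : Slice Q} {x : Alp}

lemma hatRk_two_mul (s : Slice Q) (p : ℕ) : hatRk s (2 * p) = s.rk p := by
  simp [hatRk]

lemma exists_of_hatRk_le {j : ℕ} (h : hatRk s j ≤ s.n) : ∃ p, j = 2 * p := by
  obtain ⟨p, rfl | rfl⟩ := Nat.even_or_odd' j
  · exact ⟨p, rfl⟩
  · simp [hatRk] at h

lemma Slice.Valid.one_le_hatRk (hs : s.Valid) {j : ℕ} (hj : j ∈ Set.Icc 1 (2 * s.n)) :
    1 ≤ hatRk s j := by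
  obtain ⟨h₁, hn⟩ := hj
  unfold hatRk
  split_ifs
  · omega
  · exact (hs.2.2.1.mapsTo (show j / 2 ∈ Set.Icc 1 s.n from ⟨by omega, by omega⟩)).1

lemma Slice.Valid.injOn_hatRk (hs : s.Valid) :
    Set.InjOn (hatRk s) {j ∈ Set.Icc 1 (2 * s.n) | hatRk s j ≤ s.n} := by
  rintro j ⟨⟨hj₁, hjn⟩, hj⟩ j' ⟨⟨hj'₁, hj'n⟩, hj'⟩ heq
  obtain ⟨p, rfl⟩ := exists_of_hatRk_le hj
  obtain ⟨p', rfl⟩ := exists_of_hatRk_le hj'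
  rw [hatRk_two_mul, hatRk_two_mul] at heq
  rw [hs.2.2.1.injOn ⟨by omega, by omega⟩ ⟨by omega, by omega⟩ heq]

lemma exists_mem_hatS_of_mem_dTs {i : ℕ} (hi : 1 ≤ i) {q' : Q}
    (h : q' ∈ dTs A s (s.S i) x) : ∃ j ∈ Set.Icc 1 (2 * i), q' ∈ hatS A s x j := by
  by_cases hF : q' ∈ A.F
  · refine ⟨2 * i - 1, ⟨by omega, by omega⟩, ?_⟩
    rw [hatS, if_pos (by omega), show (2 * i - 1 + 1) / 2 = i by omega]
    exact ⟨h, hF⟩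
  · refine ⟨2 * i, ⟨by omega, le_rfl⟩, ?_⟩
    rw [hatS, if_neg (by omega), show 2 * i / 2 = i by omega]
    exact ⟨h, hF⟩

lemma exists_mem_dTs_of_mem_hatS {j : ℕ} (hj : j ∈ Set.Icc 1 (2 * s.n)) {q' : Q}
    (h : q' ∈ hatS A s x j) : ∃ i ∈ Set.Icc 1 s.n, q' ∈ dTs A s (s.S i) x := by
  obtain ⟨h₁, hn⟩ := hj
  unfold hatS at h
  split_ifs at h
  · exact ⟨(j + 1) / 2, ⟨by omega, by omega⟩, h.1⟩
  · exact ⟨j / 2, ⟨by omega, by omega⟩, h.1⟩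

/-- The successor `q'` lands below the leftmost set that can reach it. -/
lemma Slice.Valid.exists_mem_hatS (hs : s.Valid) {i : ℕ} (hi : i ∈ Set.Icc 1 s.n) {q q' : Q}
    (hq : q ∈ s.S i) (hq' : q' ∈ A.delta q x) :
    ∃ j ∈ Set.Icc 1 (2 * i), q' ∈ hatS A s x j := by
  classical
  have hex : ∃ i, i ∈ Set.Icc 1 s.n ∧ ∃ p ∈ s.S i, q' ∈ A.delta p x := ⟨i, hi, q, hq, hq'⟩
  obtain ⟨hm, p, hp, hpq'⟩ := Nat.find_spec hex
  have hmi : Nat.find hex ≤ i := Nat.find_min' hex ⟨hi, q, hq, hq'⟩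
  have hdTs : q' ∈ dTs A s (s.S (Nat.find hex)) x := by
    refine Set.mem_biUnion hp ⟨hpq', fun hleft => ?_⟩
    rw [hs.idx_eq hm hp, NBA.mem_nextSet] at hleft
    obtain ⟨r, hr, hrq'⟩ := hleft
    obtain ⟨l, ⟨hl₁, hlm⟩, hrl⟩ := Set.mem_iUnion₂.mp hr
    exact Nat.find_min hex hlm ⟨⟨hl₁, hlm.le.trans hm.2⟩, r, hrl, hrq'⟩
  obtain ⟨j, hj, hq'j⟩ := exists_mem_hatS_of_mem_dTs hm.1 hdTs
  exact ⟨j, ⟨hj.1, hj.2.trans (by omega)⟩, hq'j⟩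

lemma Slice.Valid.iUnion_hatS (hs : s.Valid) :
    ⋃ j ∈ Set.Icc 1 (2 * s.n), hatS A s x j = A.nextSet s.states x := by
  ext q'
  rw [Set.mem_iUnion₂, NBA.mem_nextSet]
  constructor
  · rintro ⟨j, hj, hq'⟩
    obtain ⟨i, hi, hq'i⟩ := exists_mem_dTs_of_mem_hatS hj hq'
    obtain ⟨q, hq, hqq'⟩ := Set.mem_iUnion₂.mp hq'i
    exact ⟨q, Slice.mem_states.mpr ⟨i, hi, hq⟩, hqq'.1⟩
  · rintro ⟨q, hq, hqq'⟩
    obtain ⟨i, hi, hqi⟩ := Slice.mem_states.mp hq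
    obtain ⟨j, hj, hq'j⟩ := hs.exists_mem_hatS hi hqi hqq'
    exact ⟨j, ⟨hj.1, hj.2.trans (Nat.mul_le_mul_left 2 hi.2)⟩, hq'j⟩

end Step

section Prune

variable {A : NBA Q Alp} {s : Slice Q} {x : Alp} {nt : ℕ} {xs : ℕ → ℕ}

namespace IsPrune

lemma strictMonoOn_succ (hp : IsPrune A s x nt xs) :
    StrictMonoOn xs (Set.Icc 1 (nt + 1)) := by
  intro a ha b hb hab
  rcases hb.2.lt_or_eq with hlt | rfl
  · exact hp.1 ⟨ha.1, by omega⟩ ⟨hb.1, by omega⟩ hab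
  · rw [hp.2.2.2]
    exact Nat.lt_succ_iff.mpr (hp.2.1 a ⟨ha.1, by omega⟩).1.2

lemma image_eq (hp : IsPrune A s x nt xs) :
    xs '' Set.Icc 1 nt = {j ∈ Set.Icc 1 (2 * s.n) | (hatS A s x j).Nonempty} := by
  ext j
  exact ⟨by rintro ⟨l, hl, rfl⟩; exact hp.2.1 l hl, fun hj => hp.2.2.1 j hj.1 hj.2⟩

lemma eqOn_tildeRk {nt' : ℕ} {xs' : ℕ → ℕ} (hp : IsPrune A s x nt xs)
    (hp' : IsPrune A s x nt' xs') :
    nt = nt' ∧ Set.EqOn (tildeRk s xs) (tildeRk s xs') (Set.Icc 1 nt) := by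
  obtain ⟨rfl, heq⟩ := eqOn_of_image_Icc_eq hp.1 hp'.1 (hp.image_eq.trans hp'.image_eq.symm)
  refine ⟨rfl, fun l hl => ?_⟩
  have hsucc : xs (l + 1) = xs' (l + 1) := by
    rcases hl.2.lt_or_eq with hlt | rfl
    · exact heq ⟨by omega, hlt⟩
    · rw [hp.2.2.2, hp'.2.2.2]
  rw [tildeRk, heq hl, hsucc, tildeRk]

lemma domRank_eq {nt' : ℕ} {xs' : ℕ → ℕ} (hp : IsPrune A s x nt xs)
    (hp' : IsPrune A s x nt' xs') (card : ℕ) :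
    domRank (greenSet A s x nt xs) (redSet s nt xs) card =
      domRank (greenSet A s x nt' xs') (redSet s nt' xs') card := by
  obtain ⟨rfl, heq⟩ := hp.eqOn_tildeRk hp'
  have himage : ∀ r, (∃ l ∈ Set.Icc 1 nt, tildeRk s xs l = r) ↔
      ∃ l ∈ Set.Icc 1 nt, tildeRk s xs' l = r := fun r =>
    exists_congr fun l => and_congr_right fun hl => by rw [heq hl]
  simp only [greenSet, redSet, himage]

lemma exists_hatRk_eq_tildeRk (hp : IsPrune A s x nt xs) {l : ℕ} (hl : l ∈ Set.Icc 1 nt) :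
    ∃ j ∈ Set.Ico (xs l) (xs (l + 1)), hatRk s j = tildeRk s xs l := by
  have hlt : xs l < xs (l + 1) :=
    hp.strictMonoOn_succ ⟨hl.1, hl.2.trans nt.le_succ⟩ ⟨by omega, Nat.succ_le_succ hl.2⟩
      l.lt_succ_self
  exact Nat.sInf_mem ((Set.nonempty_Ico.mpr hlt).image (hatRk s))

end IsPrune

lemma tildeRk_le {l j : ℕ} (hj : j ∈ Set.Ico (xs l) (xs (l + 1))) :
    tildeRk s xs l ≤ hatRk s j :=
  Nat.sInf_le ⟨j, hj, rfl⟩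

lemma notMem_of_lt_domRank {G R : Set ℕ} {card r : ℕ} (h : r < domRank G R card) :
    r ∉ G ∪ R := by
  unfold domRank at h
  split_ifs at h with hne
  · exact Nat.notMem_of_lt_sInf h
  · exact fun hr => hne ⟨r, hr⟩

end Prune

section Cells

variable {A : NBA Q Alp} {s : Slice Q} {x : Alp} {nt n' : ℕ} {xs b : ℕ → ℕ}

/-- Pruning followed by merging partitions the positions of the step stage into cells: the `y`-th
set of the new slice gathers all `Ŝ_j` with `cellStart xs b y ≤ j < cellStart xs b (y + 1)`. -/
def cellStart (xs b : ℕ → ℕ) (y : ℕ) : ℕ := xs (b (y - 1) + 1)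

/-- The ranking `α̌` of the merge stage. -/
noncomputable def cellRk (s : Slice Q) (xs b : ℕ → ℕ) (y : ℕ) : ℕ :=
  sInf (tildeRk s xs '' Set.Icc (b (y - 1) + 1) (b y))

namespace IsIntervalPartition

lemma lt_of_mem (hb : IsIntervalPartition nt n' b) {y : ℕ} (hy : y ∈ Set.Icc 1 n') :
    b (y - 1) < b y :=
  hb.2.2 ⟨Nat.zero_le _, by have := hy.2; omega⟩ ⟨Nat.zero_le _, hy.2⟩ (by have := hy.1; omega)

lemma le_of_le (hb : IsIntervalPartition nt n' b) {y : ℕ} (hy : y ≤ n') : b y ≤ nt :=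
  hb.2.1 ▸ hb.2.2.monotoneOn ⟨Nat.zero_le _, hy⟩ ⟨Nat.zero_le _, le_rfl⟩ hy

lemma mem_Icc_of_mem_interval (hb : IsIntervalPartition nt n' b) {y l : ℕ}
    (hy : y ∈ Set.Icc 1 n') (hl : l ∈ Set.Icc (b (y - 1) + 1) (b y)) : l ∈ Set.Icc 1 nt :=
  ⟨(Nat.succ_pos _).trans_le hl.1, hl.2.trans (hb.le_of_le hy.2)⟩

lemma cellStart_last (hb : IsIntervalPartition nt n' b) (hp : IsPrune A s x nt xs) :
    cellStart xs b (n' + 1) = 2 * s.n + 1 := by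
  rw [cellStart, Nat.add_sub_cancel, hb.2.1, hp.2.2.2]

lemma strictMonoOn_cellStart (hb : IsIntervalPartition nt n' b) (hp : IsPrune A s x nt xs) :
    StrictMonoOn (cellStart xs b) (Set.Icc 1 (n' + 1)) := by
  rintro y ⟨hy₁, hyn⟩ z ⟨hz₁, hzn⟩ hyz
  have hlt : b (y - 1) < b (z - 1) :=
    hb.2.2 ⟨Nat.zero_le _, by omega⟩ ⟨Nat.zero_le _, by omega⟩ (by omega)
  have hle : b (z - 1) ≤ nt := hb.le_of_le (by omega)
  exact hp.strictMonoOn_succ ⟨by omega, by omega⟩ ⟨by omega, by omega⟩ (by omega)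

lemma exists_cell (hb : IsIntervalPartition nt n' b) (hp : IsPrune A s x nt xs) {j : ℕ}
    (h₁ : cellStart xs b 1 ≤ j) (hn : j ≤ 2 * s.n) :
    ∃ y ∈ Set.Icc 1 n', j ∈ Set.Ico (cellStart xs b y) (cellStart xs b (y + 1)) := by
  obtain ⟨y, hy, hjy⟩ := exists_mem_Ico_le_lt_succ (Nat.succ_le_succ n'.zero_le) h₁
    ((Nat.lt_succ_iff.mpr hn).trans_eq (hb.cellStart_last hp).symm)
  exact ⟨y, ⟨hy.1, Nat.lt_succ_iff.mp hy.2⟩, hjy⟩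

lemma mem_cell_iff (hb : IsIntervalPartition nt n' b) (hp : IsPrune A s x nt xs) {y l : ℕ}
    (hy : y ∈ Set.Icc 1 n') (hl : l ∈ Set.Icc 1 nt) :
    xs l ∈ Set.Ico (cellStart xs b y) (cellStart xs b (y + 1)) ↔
      l ∈ Set.Icc (b (y - 1) + 1) (b y) := by
  have hlt := hb.lt_of_mem hy
  have hle := hb.le_of_le hy.2
  have hl' : l ∈ Set.Icc 1 (nt + 1) := ⟨hl.1, hl.2.trans nt.le_succ⟩
  refine and_congr (hp.strictMonoOn_succ.le_iff_le ⟨by omega, by omega⟩ hl') ?_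
  exact (hp.strictMonoOn_succ.lt_iff_lt hl' ⟨by omega, Nat.succ_le_succ hle⟩).trans
    Nat.lt_succ_iff

lemma cell_subset (hb : IsIntervalPartition nt n' b) (hp : IsPrune A s x nt xs) {y : ℕ}
    (hy : y ∈ Set.Icc 1 n') :
    Set.Ico (cellStart xs b y) (cellStart xs b (y + 1)) ⊆ Set.Icc 1 (2 * s.n) := by
  rintro j ⟨hyj, hjy⟩
  have hfirst : 1 ≤ cellStart xs b y :=
    (hp.2.1 _ (hb.mem_Icc_of_mem_interval hy ⟨le_rfl, hb.lt_of_mem hy⟩)).1.1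
  have hlast : cellStart xs b (y + 1) ≤ 2 * s.n + 1 := hb.cellStart_last hp ▸
    (hb.strictMonoOn_cellStart hp).monotoneOn ⟨by omega, Nat.succ_le_succ hy.2⟩
      ⟨by omega, le_rfl⟩ (Nat.succ_le_succ hy.2)
  exact ⟨by omega, by omega⟩

lemma cells_disjoint (hb : IsIntervalPartition nt n' b) (hp : IsPrune A s x nt xs) {y z j : ℕ}
    (hy : y ∈ Set.Icc 1 n') (hz : z ∈ Set.Icc 1 n')
    (hjy : j ∈ Set.Ico (cellStart xs b y) (cellStart xs b (y + 1)))
    (hjz : j ∈ Set.Ico (cellStart xs b z) (cellStart xs b (z + 1))) : y = z := by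
  have hlt : ∀ {a c}, a ∈ Set.Icc 1 n' → c ∈ Set.Icc 1 n' →
      cellStart xs b a < cellStart xs b (c + 1) → a ≤ c := fun ha hc h =>
    Nat.lt_succ_iff.mp <| ((hb.strictMonoOn_cellStart hp).lt_iff_lt
      ⟨ha.1, ha.2.trans n'.le_succ⟩ ⟨by omega, Nat.succ_le_succ hc.2⟩).mp h
  exact le_antisymm (hlt hy hz (hjy.1.trans_lt hjz.2)) (hlt hz hy (hjz.1.trans_lt hjy.2))

lemma exists_cell_of_nonempty (hb : IsIntervalPartition nt n' b) (hp : IsPrune A s x nt xs)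
    {j : ℕ} (hj : j ∈ Set.Icc 1 (2 * s.n)) (hne : (hatS A s x j).Nonempty) :
    ∃ y ∈ Set.Icc 1 n', j ∈ Set.Ico (cellStart xs b y) (cellStart xs b (y + 1)) := by
  obtain ⟨l, hl, rfl⟩ := hp.2.2.1 j hj hne
  refine hb.exists_cell hp ?_ hj.2
  have hfirst : cellStart xs b 1 = xs 1 := by rw [cellStart, Nat.sub_self, hb.1]
  exact hfirst ▸ hp.1.monotoneOn ⟨le_rfl, hl.1.trans hl.2⟩ hl hl.1

lemma iUnion_hatS_interval (hb : IsIntervalPartition nt n' b) (hp : IsPrune A s x nt xs)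
    {y : ℕ} (hy : y ∈ Set.Icc 1 n') :
    ⋃ l ∈ Set.Icc (b (y - 1) + 1) (b y), hatS A s x (xs l) =
      ⋃ j ∈ Set.Ico (cellStart xs b y) (cellStart xs b (y + 1)), hatS A s x j := by
  ext q'
  rw [Set.mem_iUnion₂, Set.mem_iUnion₂]
  constructor
  · rintro ⟨l, hl, hq'⟩
    exact ⟨xs l, (hb.mem_cell_iff hp hy (hb.mem_Icc_of_mem_interval hy hl)).mpr hl, hq'⟩
  · rintro ⟨j, hj, hq'⟩
    obtain ⟨l, hl, rfl⟩ := hp.2.2.1 j (hb.cell_subset hp hy hj) ⟨q', hq'⟩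
    exact ⟨l, (hb.mem_cell_iff hp hy hl).mp hj, hq'⟩

lemma exists_hatRk_eq_cellRk (hb : IsIntervalPartition nt n' b) (hp : IsPrune A s x nt xs)
    {y : ℕ} (hy : y ∈ Set.Icc 1 n') :
    ∃ j ∈ Set.Ico (cellStart xs b y) (cellStart xs b (y + 1)),
      hatRk s j = cellRk s xs b y := by
  obtain ⟨l, hl, hrk⟩ : cellRk s xs b y ∈ tildeRk s xs '' Set.Icc (b (y - 1) + 1) (b y) :=
    Nat.sInf_mem ((Set.nonempty_Icc.mpr (hb.lt_of_mem hy)).image _)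
  have hl' := hb.mem_Icc_of_mem_interval hy hl
  obtain ⟨j, hj, hjl⟩ := hp.exists_hatRk_eq_tildeRk hl'
  have hstart := ((hb.mem_cell_iff hp hy hl').mpr hl).1
  have hend : xs (l + 1) ≤ cellStart xs b (y + 1) :=
    hp.strictMonoOn_succ.monotoneOn ⟨by omega, Nat.succ_le_succ hl'.2⟩
      ⟨by omega, Nat.succ_le_succ (hb.le_of_le hy.2)⟩ (Nat.succ_le_succ hl.2)
  exact ⟨j, ⟨hstart.trans hj.1, hj.2.trans_le hend⟩, hjl.trans hrk⟩

lemma one_le_cellRk (hb : IsIntervalPartition nt n' b) (hp : IsPrune A s x nt xs)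
    (hs : s.Valid) {y : ℕ} (hy : y ∈ Set.Icc 1 n') : 1 ≤ cellRk s xs b y := by
  obtain ⟨j, hj, hrk⟩ := hb.exists_hatRk_eq_cellRk hp hy
  exact hrk ▸ hs.one_le_hatRk (hb.cell_subset hp hy hj)

lemma injOn_cellRk (hb : IsIntervalPartition nt n' b) (hp : IsPrune A s x nt xs)
    (hs : s.Valid) : Set.InjOn (cellRk s xs b) {y ∈ Set.Icc 1 n' | cellRk s xs b y ≤ s.n} := by
  rintro y ⟨hy, hyn⟩ z ⟨hz, hzn⟩ heq
  obtain ⟨j, hj, hjy⟩ := hb.exists_hatRk_eq_cellRk hp hy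
  obtain ⟨j', hj', hj'z⟩ := hb.exists_hatRk_eq_cellRk hp hz
  obtain rfl : j = j' := hs.injOn_hatRk ⟨hb.cell_subset hp hy hj, hjy.trans_le hyn⟩
    ⟨hb.cell_subset hp hz hj', hj'z.trans_le hzn⟩ (hjy.trans (heq.trans hj'z.symm))
  exact hb.cells_disjoint hp hy hz hj hj'

end IsIntervalPartition

lemma cellRk_le_hatRk {y j : ℕ} (hb : b (y - 1) ≤ b y)
    (hj : j ∈ Set.Ico (cellStart xs b y) (cellStart xs b (y + 1))) :
    cellRk s xs b y ≤ hatRk s j := by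
  obtain ⟨l, hl, hjl⟩ := exists_mem_Ico_le_lt_succ (Nat.succ_le_succ hb) hj.1 hj.2
  have hle : cellRk s xs b y ≤ tildeRk s xs l :=
    Nat.sInf_le ⟨l, ⟨hl.1, Nat.lt_succ_iff.mp hl.2⟩, rfl⟩
  exact hle.trans (tildeRk_le hjl)

/-- An inactive rank is not red, so it survives pruning, and hence not green, so the right child
carrying it is nonempty. -/
lemma IsPrune.exists_eq_two_mul_of_rk_inactive (hp : IsPrune A s x nt xs) (hs : s.Valid) {p : ℕ}
    (hpn : p ∈ Set.Icc 1 s.n) (hinactive : s.rk p ∉ greenSet A s x nt xs ∪ redSet s nt xs) :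
    ∃ l ∈ Set.Icc 1 nt, xs l = 2 * p ∧ tildeRk s xs l = s.rk p := by
  have hp2 : 2 * p ∈ Set.Icc 1 (2 * s.n) := ⟨by have := hpn.1; omega, by have := hpn.2; omega⟩
  have hrk := hatRk_two_mul s p
  have hrkn : s.rk p ≤ s.n := (hs.2.2.1.mapsTo hpn).2
  obtain ⟨l, hl, hlp⟩ : ∃ l ∈ Set.Icc 1 nt, tildeRk s xs l = s.rk p := by
    by_contra hred
    exact hinactive (Or.inr ⟨⟨2 * p, hp2, hrk⟩, hred⟩)
  have hne : (hatS A s x (2 * p)).Nonempty := by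
    by_contra hempty
    rw [Set.not_nonempty_iff_eq_empty] at hempty
    exact hinactive (Or.inl ⟨⟨l, hl, hlp⟩, 2 * p, hp2, hempty, hrk⟩)
  obtain ⟨m, hm, hmp⟩ := hp.2.2.1 (2 * p) hp2 hne
  obtain ⟨j, hj, hjl⟩ := hp.exists_hatRk_eq_tildeRk hl
  have hl' : l + 1 ∈ Set.Icc 1 (nt + 1) := ⟨by omega, Nat.succ_le_succ hl.2⟩
  have hjn : j ∈ Set.Icc 1 (2 * s.n) := by
    have hstart := (hp.2.1 l hl).1.1
    have hend := hp.strictMonoOn_succ.monotoneOn hl' ⟨by omega, le_rfl⟩ hl'.2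
    rw [hp.2.2.2] at hend
    exact ⟨hstart.trans hj.1, Nat.lt_succ_iff.mp (hj.2.trans_le hend)⟩
  obtain rfl : j = xs m := by
    rw [hmp]
    exact hs.injOn_hatRk ⟨hjn, by omega⟩ ⟨hp2, by omega⟩ (hjl.trans (hlp.trans hrk.symm))
  obtain rfl : l = m := le_antisymm ((hp.1.le_iff_le hl hm).mp hj.1) <| Nat.lt_succ_iff.mp <|
    (hp.strictMonoOn_succ.lt_iff_lt ⟨hm.1, hm.2.trans nt.le_succ⟩ hl').mp hj.2
  exact ⟨l, hl, hmp, hlp⟩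

lemma MergeConstraints.exists_cellStart_eq_two_mul {k : ℕ}
    (hM : MergeConstraints n' b (tildeRk s xs) k) (hb : IsIntervalPartition nt n' b)
    (hp : IsPrune A s x nt xs) (hs : s.Valid) {p : ℕ} (hpn : p ∈ Set.Icc 1 s.n)
    (hinactive : s.rk p ∉ greenSet A s x nt xs ∪ redSet s nt xs) (hpk : s.rk p < k) :
    ∃ y ∈ Set.Icc 1 n', cellStart xs b y = 2 * p ∧ cellRk s xs b y = s.rk p := by
  obtain ⟨l, hl, hlp, hrk⟩ := hp.exists_eq_two_mul_of_rk_inactive hs hpn hinactive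
  obtain ⟨y, hy, hcell⟩ := hb.exists_cell_of_nonempty hp (hp.2.1 l hl).1 (hp.2.1 l hl).2
  have hmem := (hb.mem_cell_iff hp hy hl).mp hcell
  have hsingle : b y = b (y - 1) + 1 := (hM y hy l hmem).1 (hrk.trans_lt hpk)
  obtain rfl : l = b (y - 1) + 1 := le_antisymm (hmem.2.trans_eq hsingle) hmem.1
  refine ⟨y, hy, hlp, ?_⟩
  rw [cellRk, hsingle, Set.Icc_self, Set.image_singleton, csInf_singleton, hrk]

end Cells

section Transition

variable [Fintype Q] {A : NBA Q Alp} {s s' : Slice Q} {x : Alp} {pr nt n' : ℕ} {xs b : ℕ → ℕ}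

namespace TransVia

lemma S_eq_iUnion_cell (h : TransVia A s x s' pr nt xs n' b) {y : ℕ} (hy : y ∈ Set.Icc 1 n') :
    s'.S y = ⋃ j ∈ Set.Ico (cellStart xs b y) (cellStart xs b (y + 1)), hatS A s x j := by
  obtain ⟨hp, hb, -, -, -, hS, -, -⟩ := h
  rw [hS y hy, hb.iUnion_hatS_interval hp hy]

lemma states_eq (h : TransVia A s x s' pr nt xs n' b) (hs : s.Valid) :
    s'.states = A.nextSet s.states x := by
  obtain ⟨hp, hb, -, -, rfl, -, -, -⟩ := id h
  rw [← hs.iUnion_hatS]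
  ext q'
  rw [Slice.mem_states, Set.mem_iUnion₂]
  constructor
  · rintro ⟨y, hy, hq'⟩
    rw [h.S_eq_iUnion_cell hy] at hq'
    obtain ⟨j, hj, hq'j⟩ := Set.mem_iUnion₂.mp hq'
    exact ⟨j, hb.cell_subset hp hy hj, hq'j⟩
  · rintro ⟨j, hj, hq'j⟩
    obtain ⟨y, hy, hjy⟩ := hb.exists_cell_of_nonempty hp hj ⟨q', hq'j⟩
    exact ⟨y, hy, h.S_eq_iUnion_cell hy ▸ Set.mem_biUnion hjy hq'j⟩

lemma rk_le_cellRk (h : TransVia A s x s' pr nt xs n' b) (hs : s.Valid) {y : ℕ}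
    (hy : y ∈ Set.Icc 1 n') (hyn : cellRk s xs b y ≤ s.n) : s'.rk y ≤ cellRk s xs b y := by
  obtain ⟨hp, hb, -, -, rfl, -, hs', hmono⟩ := h
  exact normalized_le_of_injOn hs'.2.2.1 hmono (fun z => hb.one_le_cellRk hp hs)
    (hb.injOn_cellRk hp hs) hy hyn

lemma rk_le_of_mem_cell (h : TransVia A s x s' pr nt xs n' b) (hs : s.Valid) {y p : ℕ}
    (hy : y ∈ Set.Icc 1 n') (hp : p ∈ Set.Icc 1 s.n)
    (hcell : 2 * p ∈ Set.Ico (cellStart xs b y) (cellStart xs b (y + 1))) :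
    s'.rk y ≤ s.rk p := by
  have hle : cellRk s xs b y ≤ s.rk p :=
    hatRk_two_mul s p ▸ cellRk_le_hatRk (h.2.1.lt_of_mem hy).le hcell
  exact (h.rk_le_cellRk hs hy (hle.trans (hs.2.2.1.mapsTo hp).2)).trans hle

/-- All ranks up to that of `p` survive in their own cells, so normalization cannot lower it. -/
lemma exists_rk_eq_of_lt_domRank (h : TransVia A s x s' pr nt xs n' b) (hs : s.Valid) {p : ℕ}
    (hpn : p ∈ Set.Icc 1 s.n)
    (hpk : s.rk p < domRank (greenSet A s x nt xs) (redSet s nt xs) (Fintype.card Q)) :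
    ∃ y ∈ Set.Icc 1 n', cellStart xs b y = 2 * p ∧ s'.rk y = s.rk p := by
  obtain ⟨hp, hb, hM, -, rfl, -, hs', hmono⟩ := id h
  have hsurvive : ∀ r ∈ Set.Icc 1 s.n, s.rk r ≤ s.rk p →
      ∃ y ∈ Set.Icc 1 s'.n, cellStart xs b y = 2 * r ∧ cellRk s xs b y = s.rk r := by
    intro r hr hrp
    have hrk := hrp.trans_lt hpk
    exact hM.exists_cellStart_eq_two_mul hb hp hs hr (notMem_of_lt_domRank hrk) hrk
  have hrkn := (hs.2.2.1.mapsTo hpn).2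
  obtain ⟨y, hy, hstart, hrk⟩ := hsurvive p hpn le_rfl
  refine ⟨y, hy, hstart, le_antisymm ?_ ?_⟩
  · exact hrk ▸ h.rk_le_cellRk hs hy (hrk.trans_le hrkn)
  · rw [← hrk]
    refine le_normalized_of_surjOn (β := cellRk s xs b)
      (fun z hz => (hs'.2.2.1.mapsTo hz).1) hmono hy ?_
    rintro v ⟨hv₁, hvp⟩
    rw [hrk] at hvp
    obtain ⟨r, hr, rfl⟩ := hs.2.2.1.surjOn (show v ∈ Set.Icc 1 s.n from ⟨hv₁, hvp.trans hrkn⟩)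
    obtain ⟨z, hz, -, hzr⟩ := hsurvive r hr hvp
    exact ⟨z, hz, hzr⟩

lemma exists_idx_succ (h : TransVia A s x s' pr nt xs n' b) (hs : s.Valid) {q q' : Q}
    (hq : q ∈ s.states) (hq' : q' ∈ A.delta q x) :
    s.idx q ∈ Set.Icc 1 s.n ∧ s'.idx q' ∈ Set.Icc 1 n' ∧
      cellStart xs b (s'.idx q') ≤ 2 * s.idx q := by
  obtain ⟨hp, hb, -, -, rfl, -, hs', -⟩ := id h
  obtain ⟨i, hi, hqi⟩ := Slice.mem_states.mp hq
  obtain ⟨j, hj, hq'j⟩ := hs.exists_mem_hatS hi hqi hq'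
  obtain ⟨y, hy, hjy⟩ := hb.exists_cell_of_nonempty hp
    ⟨hj.1, hj.2.trans (Nat.mul_le_mul_left 2 hi.2)⟩ ⟨q', hq'j⟩
  have hq'y : q' ∈ s'.S y := h.S_eq_iUnion_cell hy ▸ Set.mem_biUnion hjy hq'j
  rw [hs.idx_eq hi hqi, hs'.idx_eq hy hq'y]
  exact ⟨hi, hy, hjy.1.trans hj.2⟩

/-- Vertices `P`, `P'` of the old and new path correspond if the cell of every position left
of `P` lies left of `P'`, which is what `2 * P ≤ cellStart xs b P' + 1` says. -/
lemma precEqK_rp (h : TransVia A s x s' pr nt xs n' b) (hs : s.Valid) {q q' : Q}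
    (hq : q ∈ s.states) (hq' : q' ∈ A.delta q x) :
    precEqK (domRank (greenSet A s x nt xs) (redSet s nt xs) (Fintype.card Q))
      (s'.rp q') (s.rp q) := by
  obtain ⟨hi, hi', hstart⟩ := h.exists_idx_succ hs hq hq'
  obtain ⟨hp, hb, -, -, rfl, -, hs', -⟩ := id h
  have hc := hb.strictMonoOn_cellStart hp
  let R : ℕ → ℕ → Prop := fun P P' =>
    P ≤ s.n + 1 ∧ P' ∈ Set.Icc 1 (s'.n + 1) ∧ 2 * P ≤ cellStart xs b P' + 1
  have hleft : ∀ {P P'}, R P P' → ∀ p < P, ∀ y ∈ Set.Icc 1 s'.n,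
      cellStart xs b y ≤ 2 * p → y < P' := by
    rintro P P' ⟨-, hP', hPP'⟩ p hpP y hy hyp
    exact (hc.lt_iff_lt ⟨hy.1, hy.2.trans s'.n.le_succ⟩ hP').mp (by omega)
  have hright : ∀ p, s.idx q ≤ p → ∀ y ∈ Set.Icc 1 s'.n,
      2 * p < cellStart xs b (y + 1) → s'.idx q' ≤ y := by
    intro p hip y hy hpy
    exact Nat.lt_succ_iff.mp <| (hc.lt_iff_lt ⟨hi'.1, hi'.2.trans s'.n.le_succ⟩
      ⟨by omega, Nat.succ_le_succ hy.2⟩).mp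
      ((hstart.trans (Nat.mul_le_mul_left 2 hip)).trans_lt hpy)
  have hmem : ∀ {P P'}, R P P' → ∀ p ∈ Set.Ico (s.idx q) P, p ∈ Set.Icc 1 s.n :=
    fun hR p hpP => ⟨hi.1.trans hpP.1, Nat.lt_succ_iff.mp (hpP.2.trans_le hR.1)⟩
  refine (isProfileBelow_rpIdx hs.2.2.1.injOn hi).precEqK (R := R) ?_ ?_
    (isProfileBelow_rpIdx hs'.2.2.1.injOn hi')
    ⟨le_rfl, ⟨by omega, le_rfl⟩, by rw [hb.cellStart_last hp]; omega⟩
  · intro P P' hR p hpP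
    have hfirst : cellStart xs b 1 ≤ 2 * p :=
      (hc.monotoneOn ⟨le_rfl, by omega⟩ ⟨hi'.1, hi'.2.trans s'.n.le_succ⟩ hi'.1).trans
        (hstart.trans (Nat.mul_le_mul_left 2 hpP.1))
    have hpn := hmem hR p hpP
    obtain ⟨y, hy, hcell⟩ := hb.exists_cell hp hfirst (Nat.mul_le_mul_left 2 hpn.2)
    exact ⟨y, ⟨hright p hpP.1 y hy hcell.2, hleft hR p hpP.2 y hy hcell.1⟩,
      h.rk_le_of_mem_cell hs hy hpn hcell⟩
  · intro P P' hR p hpP hpk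
    have hpn := hmem hR p hpP
    obtain ⟨y, hy, hcell, hrk⟩ := h.exists_rk_eq_of_lt_domRank hs hpn hpk
    have hnext := hc ⟨hy.1, hy.2.trans s'.n.le_succ⟩ ⟨by omega, Nat.succ_le_succ hy.2⟩
      y.lt_succ_self
    exact ⟨y, ⟨hright p hpP.1 y hy (hcell ▸ hnext), hleft hR p hpP.2 y hy hcell.le⟩, hrk,
      hpn.2.trans s.n.le_succ, ⟨hy.1, hy.2.trans s'.n.le_succ⟩, by omega⟩

end TransVia

end Transition

section Run

lemma TDPA.reachable_run {P : Type u} (B : TDPA P Alp) (w : ℕ → Alp) (i : ℕ) :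
    B.Reachable (B.run w i) := by
  induction i with
  | zero => exact ⟨[], rfl⟩
  | succ i ih =>
    obtain ⟨l, hl⟩ := ih
    exact ⟨l ++ [w i], by rw [List.foldl_append, hl]; rfl⟩

namespace ObtainedUnified

variable [Fintype Q] {A : NBA Q Alp} {B : TDPA (Slice Q) Alp}

lemma unifiedTrans_run (hB : ObtainedUnified A B) (w : ℕ → Alp) (i : ℕ) :
    UnifiedTrans A (B.run w i) (w i) (B.run w (i + 1)) (B.c (B.run w i) (w i)) :=
  hB.2.2.2 _ (B.reachable_run w i) (w i)

lemma valid_p0 (hB : ObtainedUnified A B) (hQ0 : A.Q0.Nonempty) : B.p0.Valid := by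
  obtain ⟨hn, hS, hrk, -⟩ := hB
  simp [Slice.Valid, hn, hS, hrk, hQ0]

lemma valid_run (hB : ObtainedUnified A B) (hQ0 : A.Q0.Nonempty) (w : ℕ → Alp) :
    ∀ i, (B.run w i).Valid
  | 0 => hB.valid_p0 hQ0
  | i + 1 => by
    obtain ⟨_, _, _, _, -, -, -, -, -, -, hvalid, -⟩ := hB.unifiedTrans_run w i
    exact hvalid

lemma states_p0 (hB : ObtainedUnified A B) : B.p0.states = A.Q0 := by
  simp [Slice.states, hB.1, hB.2.1]

lemma states_run_succ (hB : ObtainedUnified A B) (hQ0 : A.Q0.Nonempty) (w : ℕ → Alp) (i : ℕ) :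
    (B.run w (i + 1)).states = A.nextSet (B.run w i).states (w i) := by
  obtain ⟨_, _, _, _, h⟩ := hB.unifiedTrans_run w i
  exact h.states_eq (hB.valid_run hQ0 w i)

lemma mem_states_run (hB : ObtainedUnified A B) (hQ0 : A.Q0.Nonempty) {w : ℕ → Alp}
    {q : ℕ → Q} (hq : A.IsRun w q) : ∀ i, q i ∈ (B.run w i).states
  | 0 => hB.states_p0.symm ▸ hq.1
  | i + 1 => by
    rw [hB.states_run_succ hQ0 w i, NBA.mem_nextSet]
    exact ⟨q i, hB.mem_states_run hQ0 hq i, hq.2 i⟩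

end ObtainedUnified

end Run

/-- Along the run `(αᵢ, tᵢ)` of a TDPA `B` obtained from the unified
construction on `w`, with `kᵢ` the dominating rank of the transition taken at time `i`:
(a) `Q_{t_{i+1}} = Δ(Q_{tᵢ}, w i)`; and (b) every run `q` of `A` on `w` satisfies
`q i ∈ Q_{tᵢ}` and `rp(q (i+1)) ≼_{kᵢ} rp(q i)` for all `i`. -/
theorem runs_tracked_and_profiles_decrease {Q Alp : Type} [Fintype Q] (A : NBA Q Alp)
    (hQ0 : A.Q0.Nonempty) (B : TDPA (Slice Q) Alp) (hB : ObtainedUnified A B)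
    (w : ℕ → Alp) (k : ℕ → ℕ)
    (hk : ∀ i, ∃ nt xs, IsPrune A (B.run w i) (w i) nt xs ∧
      k i = domRank (greenSet A (B.run w i) (w i) nt xs)
        (redSet (B.run w i) nt xs) (Fintype.card Q)) :
    (∀ i, (B.run w (i + 1)).states = A.nextSet (B.run w i).states (w i)) ∧
    (∀ q : ℕ → Q, A.IsRun w q →
      (∀ i, q i ∈ (B.run w i).states) ∧
      (∀ i, precEqK (k i) ((B.run w (i + 1)).rp (q (i + 1)))
        ((B.run w i).rp (q i)))) := by
  refine ⟨hB.states_run_succ hQ0 w, fun q hq => ⟨hB.mem_states_run hQ0 hq, fun i => ?_⟩⟩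
  obtain ⟨nt, xs, hp, hk⟩ := hk i
  obtain ⟨nt', xs', n', b, h⟩ := hB.unifiedTrans_run w i
  rw [hk, hp.domRank_eq h.1]
  exact h.precEqK_rp (hB.valid_run hQ0 w i) (hB.mem_states_run hQ0 hq i) (hq.2 i)
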